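/- arXiv:math/0703078 — 2 statements merged into one kernel-verified Lean document; each statement's English description precedes it below -/
import Mathlib

section
/- Let (a, F) be a game with ξ := ess inf a > 0, a non-constant (F-a.e.), and ∫_{a(x)>1} log a(x) dF < ∞. Then lim_{n→∞} H_n · exp(∫_I log(a(x)+n) dF) = 1, where H_n := ∫_I 1/(a(x)+n) dF; that is, the maximized pre-growth rate of the translated game (a+n, F) at its price 1/H_n tends to 1 as n → ∞. -/
/-! Writing `a + n = n (1 + a / n)` for `n ≥ 1`, the factors `n` cancel and the expression becomes
`(∫ (1 + a / n)⁻¹) * exp (∫ log (1 + a / n))`. Since `a > 0` almost everywhere, the first integrand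
is dominated by `1` and the second by `log (1 + a) ≤ log 2 + 1_{a > 1} log a`, which is integrable
by hypothesis. Dominated convergence sends the integrals to `1` and `0`. -/

open MeasureTheory Real Set Filter Topology
open scoped Classical

/-- `1/H_ξ` where `H_ξ := ∫ 1/(a x − ess inf a) dF`, with the convention that
`1/H_ξ = 0` when `1/(a − ξ)` is not integrable (in particular when `H_ξ = ∞`). -/
noncomputable def invHxi (μ : MeasureTheory.Measure ℝ) (a : ℝ → ℝ) : ℝ :=
  if MeasureTheory.Integrable (fun x => (a x - essInf a μ)⁻¹) μ then
    (∫ x, (a x - essInf a μ)⁻¹ ∂μ)⁻¹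
  else 0

/-- The pre-growth rate `G̃_u(t) = exp (∫ log (a x · t / u − t + 1) dF)`. -/
noncomputable def preG (μ : MeasureTheory.Measure ℝ) (a : ℝ → ℝ) (u t : ℝ) : ℝ :=
  Real.exp (∫ x, Real.log (a x * t / u - t + 1) ∂μ)

/-- `H := ∫ 1/a dF`. -/
noncomputable def Hh (μ : MeasureTheory.Measure ℝ) (a : ℝ → ℝ) : ℝ :=
  ∫ x, (a x)⁻¹ ∂μ

/-- The real essential infimum is the supremum of the almost sure lower bounds of `a`. Over an empty
set of bounds it would be the junk value `0`, so positivity does yield a positive lower bound. -/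
lemma ae_pos_of_essInf_pos (μ : Measure ℝ) (a : ℝ → ℝ) (hxi : 0 < essInf a μ) :
    ∀ᵐ x ∂μ, 0 < a x := by
  have h : essInf a μ = sSup {c : ℝ | ∀ᵐ x ∂μ, c ≤ a x} := by
    rw [essInf, Filter.liminf_eq]
  rw [h] at hxi
  have hne : {c : ℝ | ∀ᵐ x ∂μ, c ≤ a x}.Nonempty := by
    by_contra hc
    rw [Set.not_nonempty_iff_eq_empty] at hc
    rw [hc, Real.sSup_empty] at hxi
    exact lt_irrefl _ hxi
  obtain ⟨c, hc, hc0⟩ := exists_lt_of_lt_csSup hne hxi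
  have hc' : ∀ᵐ x ∂μ, c ≤ a x := hc
  filter_upwards [hc'] with x hx using hc0.trans_le hx

lemma log_one_add_le_indicator (a : ℝ → ℝ) (x : ℝ) (hx : 0 < a x) :
    Real.log (1 + a x) ≤
      Real.log 2 + Set.indicator {x | 1 < a x} (fun x => Real.log (a x)) x := by
  by_cases h : 1 < a x
  · rw [Set.indicator_of_mem (by exact h), ← Real.log_mul (by norm_num) hx.ne']
    exact Real.log_le_log (by linarith) (by linarith)
  · rw [Set.indicator_of_notMem (by exact h), add_zero]
    exact Real.log_le_log (by linarith) (by linarith)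

/-- `lim_{n→∞} H_n · exp (∫ log (a + n) dF) = 1`: the maximized pre-growth rate of
the translated game at its price `1/H_n` tends to `1`. -/
theorem stmt14 (μ : Measure ℝ) [IsProbabilityMeasure μ] (a : ℝ → ℝ)
    (ha : Measurable a)
    (hnc : ¬ ∃ c : ℝ, a =ᵐ[μ] fun _ => c)
    (hxi : 0 < essInf a μ)
    (hlog : IntegrableOn (fun x => Real.log (a x)) {x | 1 < a x} μ) :
    Tendsto (fun n : ℝ =>
        (∫ x, (a x + n)⁻¹ ∂μ) * Real.exp (∫ x, Real.log (a x + n) ∂μ))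
      atTop (𝓝 1) := by
  have hpos := ae_pos_of_essInf_pos μ a hxi
  set g : ℝ → ℝ := fun x =>
    Real.log 2 + Set.indicator {x | 1 < a x} (fun x => Real.log (a x)) x with hg
  have hgint : Integrable g μ :=
    (integrable_const _).add (hlog.integrable_indicator (measurableSet_lt measurable_const ha))
  have hbound : ∀ n : ℝ, 1 ≤ n → ∀ᵐ x ∂μ, ‖Real.log (1 + a x / n)‖ ≤ g x := by
    intro n hn
    filter_upwards [hpos] with x hx
    have h0 : 0 < a x / n := by positivity
    rw [Real.norm_of_nonneg (Real.log_nonneg (by linarith))]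
    refine le_trans (Real.log_le_log (by linarith) ?_) (log_one_add_le_indicator a x hx)
    have := div_le_self hx.le hn
    linarith
  have hmeas : ∀ n : ℝ, Measurable (fun x => Real.log (1 + a x / n)) := fun n => by fun_prop
  have hpt : ∀ x, Tendsto (fun n : ℝ => 1 + a x / n) atTop (𝓝 1) := fun x => by
    simpa using (tendsto_const_nhds (x := (1 : ℝ))).add
      ((tendsto_const_nhds (x := a x)).div_atTop tendsto_id)
  have h1 : Tendsto (fun n : ℝ => ∫ x, Real.log (1 + a x / n) ∂μ) atTop (𝓝 (∫ _, (0 : ℝ) ∂μ)) := by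
    refine tendsto_integral_filter_of_dominated_convergence g
      (Eventually.of_forall fun n => (hmeas n).aestronglyMeasurable) ?_ hgint
      (Eventually.of_forall fun x => ?_)
    · filter_upwards [eventually_ge_atTop 1] with n hn using hbound n hn
    · simpa using (hpt x).log one_ne_zero
  have h2 : Tendsto (fun n : ℝ => ∫ x, (1 + a x / n)⁻¹ ∂μ) atTop (𝓝 (∫ _, (1 : ℝ) ∂μ)) := by
    refine tendsto_integral_filter_of_dominated_convergence (fun _ => 1)
      (Eventually.of_forall fun n => ?_) ?_ (integrable_const _)
      (Eventually.of_forall fun x => ?_)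
    · exact Measurable.aestronglyMeasurable (by fun_prop)
    · filter_upwards [eventually_ge_atTop 1] with n hn
      filter_upwards [hpos] with x hx
      have h0 : 0 < a x / n := by positivity
      rw [Real.norm_of_nonneg (by positivity)]
      exact inv_le_one_of_one_le₀ (by linarith)
    · simpa using (hpt x).inv₀ one_ne_zero
  have h3 := h2.mul ((Real.continuous_exp.tendsto _).comp h1)
  simp only [integral_zero, Real.exp_zero, integral_const, probReal_univ, smul_eq_mul,
    mul_one] at h3
  refine h3.congr' ?_
  filter_upwards [eventually_ge_atTop 1] with n hn
  have hn0 : 0 < n := by linarith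
  have e1 : ∫ x, (1 + a x / n)⁻¹ ∂μ = n * ∫ x, (a x + n)⁻¹ ∂μ := by
    rw [← integral_const_mul]
    congr 1
    ext x
    rw [show 1 + a x / n = (a x + n) / n by field_simp; ring, inv_div, div_eq_mul_inv]
  have e2 : ∫ x, Real.log (a x + n) ∂μ = Real.log n + ∫ x, Real.log (1 + a x / n) ∂μ := by
    have hint : Integrable (fun x => Real.log (1 + a x / n)) μ :=
      hgint.mono' (hmeas n).aestronglyMeasurable (hbound n hn)
    have : ∫ x, Real.log (a x + n) ∂μ = ∫ x, (Real.log n + Real.log (1 + a x / n)) ∂μ := by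
      refine integral_congr_ae ?_
      filter_upwards [hpos] with x hx
      have h0 : 0 < a x / n := by positivity
      rw [← Real.log_mul hn0.ne' (by positivity)]
      congr 1
      field_simp
      ring
    rw [this, integral_add (integrable_const _) hint]
    simp
  rw [Function.comp_apply, e1, e2, Real.exp_add, Real.exp_log hn0]
  ring
end

section
/- Let (a, F) be a game with ξ := ess inf a > 0, a non-constant (F-a.e.), E := ∫_I a dF finite, and ∫_{a(x)>1} log a(x) dF < ∞. Let r > 0 and n > −ξ, and suppose e^r < G̃_{1/H}(t̃_{1/H}) and e^r < G̃^{(n)}_{1/H_n}(t̃^{(n)}_{1/H_n}). If u_r ∈ (1/H, E) satisfies G̃_{u_r}(t̃_{u_r}) = e^r and v ∈ (1/H_n, E+n) satisfies G̃^{(n)}_{v}(t̃^{(n)}_{v}) = e^r, then v = u_r + n; i.e. the optimal price of the translated game is the translated optimal price. -/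
/-!
Put `p = t / u`. Then `a t / u - t + 1 = 1 + p (a - u)`, and the condition defining the pre-optimal
proportion becomes `∫ (a - u) / (1 + p (a - u)) = 0`. In this parametrisation price and profit
enter only through `a - u`, so the translated game at price `v` is the original game at price
`v - n`, and everything reduces to the fact that two prices `u`, `w` of one game with equal
pre-growth rates coincide (`not_lt_of_growth_eq`).

If `u < w`, with optimal `p` and `q` respectively, apply `log z ≤ z - 1` to
`z = (1 + q (a - w)) / (1 + p (a - u))` and integrate: optimality of `p` kills the first-order term
`(q - p) ∫ (a - u) / (1 + p (a - u))`, and what remains is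
`∫ log (1 + q (a - w)) ≤ ∫ log (1 + p (a - u)) - q (w - u) ∫ 1 / (1 + p (a - u))`,
whose last term is strictly negative.
-/


open MeasureTheory Real Set Filter Topology
open scoped Classical

/-- A positive essential infimum is a genuine a.e. lower bound: in `ℝ` the essential infimum of a
function that is not essentially bounded below would be the junk value `0`. -/
lemma ae_essInf_le_of_pos {μ : Measure ℝ} {a : ℝ → ℝ} (hxi : 0 < essInf a μ) :
    ∀ᵐ x ∂μ, essInf a μ ≤ a x := by
  apply ae_essInf_le
  have h : essInf a μ = sSup {c | ∀ᵐ x ∂μ, c ≤ a x} := by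
    simp [essInf, Filter.liminf_eq]
  have hne : {c | ∀ᵐ x ∂μ, c ≤ a x}.Nonempty := by
    rw [Set.nonempty_iff_ne_empty]
    intro h0
    rw [h, h0, Real.sSup_empty] at hxi
    exact lt_irrefl _ hxi
  obtain ⟨c, hc⟩ := hne
  exact ⟨c, by simpa using hc⟩

lemma integrable_log_of_le {μ : Measure ℝ} [IsProbabilityMeasure μ] {f : ℝ → ℝ} {c : ℝ}
    (hf : Integrable f μ) (hc : 0 < c) (hcf : ∀ᵐ x ∂μ, c ≤ f x) :
    Integrable (fun x => Real.log (f x)) μ := by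
  refine Integrable.mono' (hf.norm.add (integrable_const |Real.log c|))
    (Real.measurable_log.comp_aemeasurable hf.aemeasurable).aestronglyMeasurable ?_
  filter_upwards [hcf] with x hx
  have h1 := Real.log_le_log hc hx
  have h2 := Real.log_le_sub_one_of_pos (hc.trans_le hx)
  have h3 := neg_abs_le (Real.log c)
  have h4 := abs_nonneg (Real.log c)
  have h5 := le_abs_self (f x)
  have h6 := abs_nonneg (f x)
  simp only [Pi.add_apply, Real.norm_eq_abs]
  rw [abs_le]
  constructor <;> linarith

/-- The maximal growth rate is strictly decreasing in the price. Here `p` is optimal at price `u`,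
and `q` is any admissible proportion at price `w`. -/
lemma not_lt_of_growth_eq {μ : Measure ℝ} [IsProbabilityMeasure μ] {a : ℝ → ℝ}
    (hE : Integrable a μ) {ξ u w p q : ℝ} (hξ : ∀ᵐ x ∂μ, ξ ≤ a x)
    (hp : 0 < p) (hq : 0 < q) (hpu : p * (u - ξ) < 1) (hqw : q * (w - ξ) < 1)
    (hopt : ∫ x, (a x - u) / (1 + p * (a x - u)) ∂μ = 0)
    (heq : ∫ x, Real.log (1 + p * (a x - u)) ∂μ = ∫ x, Real.log (1 + q * (a x - w)) ∂μ) :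
    ¬ u < w := by
  intro huw
  have hD : ∀ᵐ x ∂μ, 1 - p * (u - ξ) ≤ 1 + p * (a x - u) := by
    filter_upwards [hξ] with x hx
    nlinarith [mul_le_mul_of_nonneg_left hx hp.le]
  have hN : ∀ᵐ x ∂μ, 1 - q * (w - ξ) ≤ 1 + q * (a x - w) := by
    filter_upwards [hξ] with x hx
    nlinarith [mul_le_mul_of_nonneg_left hx hq.le]
  have hDi : Integrable (fun x => 1 + p * (a x - u)) μ :=
    (integrable_const _).add ((hE.sub (integrable_const u)).const_mul p)
  have hNi : Integrable (fun x => 1 + q * (a x - w)) μ :=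
    (integrable_const _).add ((hE.sub (integrable_const w)).const_mul q)
  have hlD := integrable_log_of_le hDi (by linarith) hD
  have hlN := integrable_log_of_le hNi (by linarith) hN
  have hinv : Integrable (fun x => (1 + p * (a x - u))⁻¹) μ := by
    refine Integrable.mono' (integrable_const (1 - p * (u - ξ))⁻¹)
      hDi.aemeasurable.inv.aestronglyMeasurable ?_
    filter_upwards [hD] with x hx
    have h0 : 0 < 1 - p * (u - ξ) := by linarith
    rw [Real.norm_eq_abs, abs_of_pos (inv_pos.2 (h0.trans_le hx))]
    exact inv_anti₀ h0 hx
  have hquot : Integrable (fun x => (a x - u) / (1 + p * (a x - u))) μ := by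
    -- `p y / (1 + p y) = 1 - 1 / (1 + p y)` exhibits the quotient as bounded.
    refine (((integrable_const (1 : ℝ)).sub hinv).const_mul p⁻¹).congr ?_
    filter_upwards [hD] with x hx
    have h0 : 1 + p * (a x - u) ≠ 0 := by
      have : 0 < 1 + p * (a x - u) := by linarith
      exact this.ne'
    simp only [Pi.sub_apply]
    field_simp
    ring
  have hpos : 0 < ∫ x, (1 + p * (a x - u))⁻¹ ∂μ := by
    have hae : ∀ᵐ x ∂μ, 0 < (1 + p * (a x - u))⁻¹ := by
      filter_upwards [hD] with x hx
      exact inv_pos.2 (by linarith)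
    refine lt_of_le_of_ne (integral_nonneg_of_ae (hae.mono fun x hx => hx.le)) fun h => ?_
    have h0 := (integral_eq_zero_iff_of_nonneg_ae (hae.mono fun x hx => hx.le) hinv).1 h.symm
    obtain ⟨x, hx, hx0⟩ := (hae.and h0).exists
    exact hx.ne' hx0
  have hle : ∫ x, Real.log (1 + q * (a x - w)) ∂μ ≤
      ∫ x, (Real.log (1 + p * (a x - u)) + ((q - p) * ((a x - u) / (1 + p * (a x - u)))
        - q * (w - u) * (1 + p * (a x - u))⁻¹)) ∂μ := by
    refine integral_mono_ae hlN
      (hlD.add ((hquot.const_mul _).sub (hinv.const_mul _))) ?_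
    filter_upwards [hD, hN] with x hx hy
    have h0 : 0 < 1 + p * (a x - u) := by linarith
    have h1 : 0 < 1 + q * (a x - w) := by linarith
    have h2 := Real.log_le_sub_one_of_pos (div_pos h1 h0)
    rw [Real.log_div h1.ne' h0.ne'] at h2
    have h3 : (1 + q * (a x - w)) / (1 + p * (a x - u)) - 1 =
        (q - p) * ((a x - u) / (1 + p * (a x - u)))
          - q * (w - u) * (1 + p * (a x - u))⁻¹ := by
      field_simp
      ring
    linarith
  have hrem : Integrable (fun x => (q - p) * ((a x - u) / (1 + p * (a x - u)))
      - q * (w - u) * (1 + p * (a x - u))⁻¹) μ :=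
    (hquot.const_mul _).sub (hinv.const_mul _)
  rw [integral_add hlD hrem, integral_sub (hquot.const_mul _) (hinv.const_mul _), integral_const_mul,
    integral_const_mul, hopt, ← heq] at hle
  have := mul_pos (mul_pos hq (sub_pos.2 huw)) hpos
  linarith

/-- Passage from the proportion `t` at price `u` to the normalised proportion `t / u`. The
non-emptiness of the interval for `t` already forces `u > ξ` once `u > 0`. -/
lemma normalise {μ : Measure ℝ} {b : ℝ → ℝ} {ξ u t r : ℝ} (hu : 0 < u)
    (ht : t ∈ Set.Ioo (0 : ℝ) (u / (u - ξ)))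
    (hopt : ∫ x, (b x - u) / ((b x - u) * t + u) ∂μ = 0)
    (hG : preG μ b u t = Real.exp r) :
    0 < t / u ∧ t / u * (u - ξ) < 1 ∧
      ∫ x, (b x - u) / (1 + t / u * (b x - u)) ∂μ = 0 ∧
      ∫ x, Real.log (1 + t / u * (b x - u)) ∂μ = r := by
  have hu0 := hu.ne'
  have hd : 0 < u - ξ := by
    by_contra! h
    have := div_nonpos_of_nonneg_of_nonpos hu.le h
    linarith [ht.1, ht.2]
  refine ⟨div_pos ht.1 hu, ?_, ?_, ?_⟩
  · have := (lt_div_iff₀ hd).1 ht.2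
    rw [div_mul_eq_mul_div, div_lt_one hu]
    exact this
  · have h : ∀ x, (b x - u) / (1 + t / u * (b x - u)) =
        u * ((b x - u) / ((b x - u) * t + u)) := by
      intro x
      have e : 1 + t / u * (b x - u) = ((b x - u) * t + u) / u := by
        field_simp
        ring
      rw [e, div_div_eq_mul_div]
      ring
    simp_rw [h]
    rw [integral_const_mul, hopt, mul_zero]
  · have h := Real.exp_injective hG
    rw [← h]
    congr 1
    funext x
    congr 1
    field_simp
    ring

/-- The optimal price of the translated game is the translated optimal price:
`u̲_r = u_r + n`. -/
theorem stmt15 (μ : Measure ℝ) [IsProbabilityMeasure μ] (a : ℝ → ℝ)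
    (ha : Measurable a)
    (hnc : ¬ ∃ c : ℝ, a =ᵐ[μ] fun _ => c)
    (hxi : 0 < essInf a μ)
    (hE : Integrable a μ)
    (hlog : IntegrableOn (fun x => Real.log (a x)) {x | 1 < a x} μ)
    (n r : ℝ) (hr : 0 < r) (hn : -essInf a μ < n)
    (ur v t s t1 s1 : ℝ)
    (hur : ur ∈ Set.Ioo (Hh μ a)⁻¹ (∫ x, a x ∂μ))
    (hv : v ∈ Set.Ioo (Hh μ (fun x => a x + n))⁻¹ ((∫ x, a x ∂μ) + n))
    (ht : t ∈ Set.Ioo (0 : ℝ) (ur / (ur - essInf a μ)) ∧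
      ∫ x, (a x - ur) / ((a x - ur) * t + ur) ∂μ = 0)
    (hs : s ∈ Set.Ioo (0 : ℝ) (v / (v - (essInf a μ + n))) ∧
      ∫ x, (a x + n - v) / ((a x + n - v) * s + v) ∂μ = 0)
    (ht1 : t1 ∈ Set.Ioo (0 : ℝ) ((Hh μ a)⁻¹ / ((Hh μ a)⁻¹ - essInf a μ)) ∧
      ∫ x, (a x - (Hh μ a)⁻¹) / ((a x - (Hh μ a)⁻¹) * t1 + (Hh μ a)⁻¹) ∂μ = 0)
    (hs1 : s1 ∈ Set.Ioo (0 : ℝ)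
        ((Hh μ (fun x => a x + n))⁻¹ / ((Hh μ (fun x => a x + n))⁻¹ - (essInf a μ + n))) ∧
      ∫ x, (a x + n - (Hh μ (fun x => a x + n))⁻¹) /
        ((a x + n - (Hh μ (fun x => a x + n))⁻¹) * s1 + (Hh μ (fun x => a x + n))⁻¹) ∂μ = 0)
    (hG1 : Real.exp r < preG μ a (Hh μ a)⁻¹ t1)
    (hG1n : Real.exp r < preG μ (fun x => a x + n) (Hh μ (fun x => a x + n))⁻¹ s1)
    (hGur : preG μ a ur t = Real.exp r)
    (hGv : preG μ (fun x => a x + n) v s = Real.exp r) :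
    v = ur + n := by
  have hξ := ae_essInf_le_of_pos hxi
  have hu : 0 < ur := by
    refine lt_of_le_of_lt (inv_nonneg.2 (integral_nonneg_of_ae ?_)) hur.1
    filter_upwards [hξ] with x hx
    exact inv_nonneg.2 (by linarith)
  have hv0 : 0 < v := by
    refine lt_of_le_of_lt (inv_nonneg.2 (integral_nonneg_of_ae ?_)) hv.1
    filter_upwards [hξ] with x hx
    exact inv_nonneg.2 (by linarith)
  obtain ⟨hp, hpu, hpo, hpg⟩ := normalise hu ht.1 ht.2 hGur
  obtain ⟨hq, hqv, hqo, hqg⟩ := normalise (b := fun x => a x + n) hv0 hs.1 hs.2 hGv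
  have e : ∀ y : ℝ, y + n - v = y - (v - n) := fun y => by ring
  have e' : v - (essInf a μ + n) = v - n - essInf a μ := by ring
  simp only [e] at hqo hqg
  rw [e'] at hqv
  have h1 := not_lt_of_growth_eq hE hξ hp hq hpu hqv hpo (hpg.trans hqg.symm)
  have h2 := not_lt_of_growth_eq hE hξ hq hp hqv hpu hqo (hqg.trans hpg.symm)
  linarith [not_lt.1 h1, not_lt.1 h2]
end
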